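/- Let C ⊆ ℝ² be a simple closed curve (i.e., the image of a continuous map from the circle to ℝ² that is injective), let x and y be two distinct points of C, and let P ⊆ ℝ² be the image of an injective continuous path from x to y such that P ∩ C = {x, y}. Then the complement ℝ² \ (C ∪ P) has exactly three connected components. -/

import Mathlib

/-!
Two points of the curve `C` cut it into two arcs, so `C ∪ P` is a theta graph: arcs `γ₁, …, γₙ`
from `x` to `y`, disjoint away from their endpoints, with `n = 3`. The complement of such a graph
has exactly `n` components, which is seen by comparing branches of complex logarithms.

*At least `n`.* The function `(z - x) / (z - y)` has a continuous logarithm off each arc `γᵢ`. Two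
of these differ by `2πi` times an integer that is constant on every component. If there were fewer
than `n` components, a nontrivial integer combination of the logarithms would vanish off the
graph, and its terms would glue to a logarithm of a nonzero power of `(z - x) / (z - y)` on all of
`ℂ \ {x, y}`, which small circles around `x` forbid.

*At most `n`.* Choose points `bᵢ` in distinct bounded components. Lifting `z - bᵢ` through `exp`
along `γⱼ` ends at the principal logarithm of `y - bᵢ` up to an integer `mᵢⱼ`. With `n` or more
points `bᵢ`, some nonzero integer vector `k` makes `∑ᵢ kᵢ mᵢⱼ` independent of `j`, so
`∏ᵢ (z - bᵢ) ^ kᵢ` has a continuous logarithm on the graph. Extending it by Tietze's theorem over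
the component of `bⱼ` shows `kⱼ = 0`. Hence there are at most `n - 1` bounded components, and a
single unbounded one.
-/

open Set Metric Topology Complex Bornology

section LogBranch

variable {X ι : Type*} [TopologicalSpace X] {f f₁ f₂ g g₁ g₂ : X → ℂ} {s s₁ s₂ : Set X}

/-- `g` is a continuous branch of `log f` on `s`; its existence measures whether `f` winds around
`0`. The values of `g` and `f` outside `s` are unconstrained. -/
structure IsLogBranchOn (g f : X → ℂ) (s : Set X) : Prop where
  continuousOn : ContinuousOn g s
  exp_eq : ∀ z ∈ s, exp (g z) = f z

namespace IsLogBranchOn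

theorem mono (h : IsLogBranchOn g f s₁) (hs : s₂ ⊆ s₁) : IsLogBranchOn g f s₂ :=
  ⟨h.continuousOn.mono hs, fun z hz ↦ h.exp_eq z (hs hz)⟩

theorem congr (h : IsLogBranchOn g₁ f₁ s) (hg : EqOn g₂ g₁ s) (hf : EqOn f₂ f₁ s) :
    IsLogBranchOn g₂ f₂ s :=
  ⟨h.continuousOn.congr hg, fun z hz ↦ by rw [hg hz, hf hz, h.exp_eq z hz]⟩

theorem mul (h₁ : IsLogBranchOn g₁ f₁ s) (h₂ : IsLogBranchOn g₂ f₂ s) :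
    IsLogBranchOn (fun z ↦ g₁ z + g₂ z) (fun z ↦ f₁ z * f₂ z) s :=
  ⟨h₁.continuousOn.add h₂.continuousOn, fun z hz ↦ by
    rw [exp_add, h₁.exp_eq z hz, h₂.exp_eq z hz]⟩

theorem zpow (h : IsLogBranchOn g f s) (k : ℤ) :
    IsLogBranchOn (fun z ↦ k * g z) (fun z ↦ f z ^ k) s :=
  ⟨continuousOn_const.mul h.continuousOn, fun z hz ↦ by rw [exp_int_mul, h.exp_eq z hz]⟩

theorem sum_int_mul {t : Finset ι} {g : ι → X → ℂ} (h : ∀ i ∈ t, IsLogBranchOn (g i) f s)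
    (hf : ∀ z ∈ s, f z ≠ 0) (c : ι → ℤ) :
    IsLogBranchOn (fun z ↦ ∑ i ∈ t, c i * g i z) (fun z ↦ f z ^ ∑ i ∈ t, c i) s :=
  ⟨continuousOn_finsetSum t fun i hi ↦ continuousOn_const.mul (h i hi).continuousOn,
    fun z hz ↦ by
      have hpow (k : ℤ) : f z ^ k = exp (k * log (f z)) := by rw [exp_int_mul, exp_log (hf z hz)]
      rw [hpow, Int.cast_sum, Finset.sum_mul, exp_sum, exp_sum]
      refine Finset.prod_congr rfl fun i hi ↦ ?_
      rw [← hpow, ((h i hi).zpow (c i)).exp_eq z hz]⟩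

theorem add_int_mul_two_pi_mul_I (h : IsLogBranchOn g f s) (m : ℤ) :
    IsLogBranchOn (fun z ↦ g z + m * (2 * Real.pi * I)) f s :=
  ⟨h.continuousOn.add continuousOn_const, fun z hz ↦ by
    rw [exp_add, exp_int_mul_two_pi_mul_I, mul_one, h.exp_eq z hz]⟩

theorem exists_of_comp_val {g' : s → ℂ} (h : IsLogBranchOn g' (fun z : s ↦ f z) univ) :
    ∃ g, IsLogBranchOn g f s := by
  have hext (z : s) : Function.extend Subtype.val g' 0 z = g' z :=
    Subtype.val_injective.extend_apply g' 0 z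
  refine ⟨Function.extend Subtype.val g' 0, ?_, fun z hz ↦ ?_⟩
  · exact continuousOn_iff_continuous_domRestrict.2
      ((continuousOn_univ.1 h.continuousOn).congr fun z ↦ (hext z).symm)
  · rw [hext ⟨z, hz⟩, h.exp_eq _ (mem_univ _)]

theorem exists_union_of_isOpen (h₁ : IsLogBranchOn g₁ f s₁) (h₂ : IsLogBranchOn g₂ f s₂)
    (hs₁ : IsOpen s₁) (hs₂ : IsOpen s₂) (hg : EqOn g₁ g₂ (s₁ ∩ s₂)) :
    ∃ g, IsLogBranchOn g f (s₁ ∪ s₂) := by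
  classical
  have eq₁ : EqOn (s₁.piecewise g₁ g₂) g₁ s₁ := piecewise_eqOn s₁ g₁ g₂
  have eq₂ : EqOn (s₁.piecewise g₁ g₂) g₂ s₂ := fun z hz₂ ↦ by
    by_cases hz₁ : z ∈ s₁
    · rw [eq₁ hz₁, hg ⟨hz₁, hz₂⟩]
    · exact piecewise_eq_of_notMem s₁ g₁ g₂ hz₁
  have b₁ := h₁.congr eq₁ fun _ _ ↦ rfl
  have b₂ := h₂.congr eq₂ fun _ _ ↦ rfl
  exact ⟨_, b₁.continuousOn.union_of_isOpen b₂.continuousOn hs₁ hs₂,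
    fun z hz ↦ hz.elim (b₁.exp_eq z) (b₂.exp_eq z)⟩

theorem exists_int_continuous_sub_eq (h₁ : IsLogBranchOn g₁ f univ)
    (h₂ : IsLogBranchOn g₂ f univ) :
    ∃ n : X → ℤ, Continuous n ∧ ∀ z, g₁ z - g₂ z = n z * (2 * Real.pi * I) := by
  have exp_eq (z : X) : exp (g₁ z) = exp (g₂ z) := by
    rw [h₁.exp_eq z (mem_univ z), h₂.exp_eq z (mem_univ z)]
  choose n hn using fun z ↦ exp_eq_exp_iff_exists_int.1 (exp_eq z)
  have hsub (z : X) : g₁ z - g₂ z = n z * (2 * Real.pi * I) := sub_eq_iff_eq_add'.2 (hn z)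
  refine ⟨n, ?_, hsub⟩
  have hn_re : (fun z ↦ (n z : ℝ)) = fun z ↦ ((g₁ z - g₂ z) / (2 * Real.pi * I)).re := by
    ext z
    rw [hsub, mul_div_cancel_right₀ _ two_pi_I_ne_zero, intCast_re]
  have hcont : Continuous fun z ↦ (n z : ℝ) := by
    rw [hn_re]
    have := continuousOn_univ.1 h₁.continuousOn
    have := continuousOn_univ.1 h₂.continuousOn
    fun_prop
  exact Int.isClosedEmbedding_coe_real.isEmbedding.continuous_iff.2 hcont

theorem exists_of_homotopy {H : unitInterval × X → ℂ} (hH : Continuous H) (hH0 : ∀ p, H p ≠ 0)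
    (hg : IsLogBranchOn g (fun z ↦ H (0, z)) univ) :
    ∃ g₁, IsLogBranchOn g₁ (fun z ↦ H (1, z)) univ := by
  let H' : C(unitInterval × X, {w : ℂ // w ≠ 0}) := ⟨fun p ↦ ⟨H p, hH0 p⟩, by fun_prop⟩
  let g₀ : C(X, ℂ) := ⟨g, continuousOn_univ.1 hg.continuousOn⟩
  have hstart (z : X) : H' (0, z) = ⟨exp (g₀ z), exp_ne_zero _⟩ :=
    Subtype.ext (hg.exp_eq z (mem_univ z)).symm
  let G := isCoveringMap_exp.liftHomotopy H' g₀ hstart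
  have hG := isCoveringMap_exp.liftHomotopy_lifts H' g₀ hstart
  exact ⟨fun z ↦ G (1, z), by fun_prop, fun z _ ↦ congrArg Subtype.val (congrFun hG (1, z))⟩

end IsLogBranchOn

theorem exists_isLogBranchOn_univ [SimplyConnectedSpace X] [LocallyPathConnectedSpace X]
    (hf : Continuous f) (hf0 : ∀ z, f z ≠ 0) : ∃ g, IsLogBranchOn g f univ := by
  obtain ⟨g, ⟨-, hg⟩, -⟩ := isCoveringMapOn_exp.existsUnique_continuousMap_lifts ⟨f, hf⟩
    (exp_log (hf0 (Classical.arbitrary X))) hf0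
  exact ⟨g, by fun_prop, fun z _ ↦ congrFun hg z⟩

end LogBranch

section Winding

variable {L : ℂ → ℂ} {a b c x y : ℂ} {r : ℝ} {k : ℤ}

theorem eq_zero_of_isLogBranchOn_sphere (hr : 0 < r)
    (hL : IsLogBranchOn L (fun z ↦ c * (z - a) ^ k) (sphere a r)) : k = 0 := by
  have hmem (θ : ℝ) : circleMap a r θ ∈ sphere a r := circleMap_mem_sphere a hr.le θ
  have hc : exp (L (circleMap a r 0)) = c * r ^ k := by
    simpa [circleMap] using hL.exp_eq _ (hmem 0)
  have hlift : IsLogBranchOn (fun θ : ℝ ↦ L (circleMap a r θ))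
      (fun θ ↦ c * r ^ k * exp (θ * I) ^ k) univ :=
    ⟨(hL.continuousOn.comp_continuous (continuous_circleMap a r) hmem).continuousOn,
      fun θ _ ↦ by
        rw [hL.exp_eq _ (hmem θ), circleMap_sub_center, circleMap_zero, mul_zpow, mul_assoc]⟩
  have hlinear : IsLogBranchOn (fun θ : ℝ ↦ L (circleMap a r 0) + k * (θ * I))
      (fun θ ↦ c * r ^ k * exp (θ * I) ^ k) univ :=
    ⟨by fun_prop, fun θ _ ↦ by rw [exp_add, exp_int_mul, hc]⟩
  obtain ⟨n, hn, hsub⟩ := hlift.exists_int_continuous_sub_eq hlinear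
  have hconst : n (2 * Real.pi) = n 0 := TotallyDisconnectedSpace.eq_of_continuous n hn _ _
  have hzero := hsub 0
  have hturn := hsub (2 * Real.pi)
  have hperiodic : circleMap a r (2 * Real.pi) = circleMap a r 0 := by
    simpa using periodic_circleMap a r 0
  have hk : (k : ℂ) * (2 * Real.pi * I) = 0 := by
    rw [hconst, ← hzero, hperiodic] at hturn
    push_cast at hturn
    linear_combination -hturn
  exact_mod_cast (mul_eq_zero.1 hk).resolve_right two_pi_I_ne_zero

theorem div_mem_slitPlane_of_mem_ball {z : ℂ} (hz : z ∈ ball x (dist x y)) :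
    (z - y) / (x - y) ∈ slitPlane := by
  have hxy : x - y ≠ 0 := sub_ne_zero.2 (dist_pos.1 (dist_nonneg.trans_lt hz))
  have hnorm : ‖(z - x) / (x - y)‖ < 1 := by
    rw [norm_div, div_lt_one (norm_pos_iff.2 hxy), ← dist_eq, ← dist_eq]
    exact hz
  have heq : (z - y) / (x - y) = 1 + (z - x) / (x - y) := by
    field_simp
    ring
  exact heq ▸ mem_slitPlane_of_norm_lt_one hnorm

theorem eq_zero_of_isLogBranchOn_compl_pair (hxy : x ≠ y)
    (hL : IsLogBranchOn L (fun z ↦ ((z - x) / (z - y)) ^ k) {x, y}ᶜ) : k = 0 := by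
  have hr : 0 < dist x y / 2 := half_pos (dist_pos.2 hxy)
  have hball : sphere x (dist x y / 2) ⊆ ball x (dist x y) := fun z hz ↦ by
    rw [mem_ball, mem_sphere.1 hz]
    linarith
  have hsphere : sphere x (dist x y / 2) ⊆ {x, y}ᶜ := by
    rintro z hz (rfl | rfl)
    · exact ne_of_mem_sphere hz hr.ne' rfl
    · exact (mem_ball.1 (hball hz)).ne (dist_comm _ _)
  have hlog : IsLogBranchOn (fun z ↦ log ((z - y) / (x - y))) (fun z ↦ (z - y) / (x - y))
      (sphere x (dist x y / 2)) :=
    ⟨ContinuousOn.clog (by fun_prop) fun z hz ↦ div_mem_slitPlane_of_mem_ball (hball hz),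
      fun z hz ↦ exp_log (slitPlane_ne_zero (div_mem_slitPlane_of_mem_ball (hball hz)))⟩
  have hprod := (hL.mono hsphere).mul (hlog.zpow k)
  refine eq_zero_of_isLogBranchOn_sphere (c := (x - y)⁻¹ ^ k) hr
    (hprod.congr (fun _ _ ↦ rfl) fun z hz ↦ ?_)
  have hzy : z - y ≠ 0 := sub_ne_zero.2 fun h ↦ hsphere hz (Or.inr h)
  simp only [← mul_zpow]
  rw [div_mul_div_cancel₀ hzy, div_eq_inv_mul]

theorem eq_zero_of_eqOn_frontier_sub_zpow {U : Set ℂ} (hU : IsOpen U) (hUb : IsBounded U)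
    (hb : b ∈ U) {H : ℂ → ℂ} (hH : ContinuousOn H (closure U)) (hH0 : ∀ z ∈ closure U, H z ≠ 0)
    (hfr : EqOn H (fun z ↦ (z - b) ^ k) (frontier U)) : k = 0 := by
  classical
  have hsub {z : ℂ} (hz : z ∉ U) : z - b ≠ 0 := sub_ne_zero.2 fun h ↦ hz (h ▸ hb)
  let F : ℂ → ℂ := U.piecewise H fun z ↦ (z - b) ^ k
  have hF : Continuous F := by
    refine continuous_piecewise hfr hH (ContinuousOn.zpow₀ (by fun_prop) k fun z hz ↦ Or.inl ?_)
    rw [hU.isClosed_compl.closure_eq] at hz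
    exact hsub hz
  have hF0 (z : ℂ) : F z ≠ 0 := by
    by_cases hz : z ∈ U
    · simpa only [F, piecewise_eq_of_mem _ _ _ hz] using hH0 z (subset_closure hz)
    · simpa only [F, piecewise_eq_of_notMem _ _ _ hz] using zpow_ne_zero k (hsub hz)
  obtain ⟨L, hL⟩ := exists_isLogBranchOn_univ hF hF0
  obtain ⟨r, hr, hUr⟩ := hUb.subset_ball_lt 0 b
  refine eq_zero_of_isLogBranchOn_sphere (a := b) (c := 1) hr
    ((hL.mono (subset_univ _)).congr (fun _ _ ↦ rfl) fun z hz ↦ ?_)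
  have hzU : z ∉ U := fun h ↦ (mem_ball.1 (hUr h)).ne hz
  simp only [F, piecewise_eq_of_notMem _ _ _ hzU, one_mul]

end Winding

section LowerBound

variable {ι : Type*} [Fintype ι] {x y : ℂ} {A : ι → Set ℂ} {g : ι → ℂ → ℂ}

theorem exists_isLogBranchOn_compl_range (γ : Path x y) :
    ∃ g, IsLogBranchOn g (fun z ↦ (z - x) / (z - y)) (range γ)ᶜ := by
  have hne (z : ↥(range γ)ᶜ) (t : unitInterval) : (z : ℂ) - γ t ≠ 0 := fun h ↦
    z.2 ⟨t, (sub_eq_zero.1 h).symm⟩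
  have hy (z : ↥(range γ)ᶜ) : (z : ℂ) - y ≠ 0 := by simpa only [γ.target] using hne z 1
  -- Moving `x` to `y` along `γ` deforms `(z - x) / (z - y)` to `1` among nonvanishing functions.
  let H : unitInterval × ↥(range γ)ᶜ → ℂ := fun p ↦ (p.2 - γ.symm p.1) / (p.2 - y)
  have hH : Continuous H := Continuous.div (by fun_prop) (by fun_prop) fun p ↦ hy p.2
  have hH0 (p : unitInterval × ↥(range γ)ᶜ) : H p ≠ 0 := div_ne_zero (hne p.2 _) (hy p.2)
  have hstart : IsLogBranchOn (fun _ ↦ 0) (fun z ↦ H (0, z)) univ :=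
    ⟨continuousOn_const, fun z _ ↦ by simp [H, div_self (hy z)]⟩
  obtain ⟨g, hg⟩ := hstart.exists_of_homotopy hH hH0
  exact (hg.congr (fun _ _ ↦ rfl) fun z _ ↦ by simp [H]).exists_of_comp_val

theorem eq_zero_of_sum_int_mul_isLogBranchOn (hxy : x ≠ y) (hA : ∀ i, IsClosed (A i))
    (hAA : Pairwise fun i j ↦ A i ∩ A j ⊆ {x, y})
    (hg : ∀ i, IsLogBranchOn (g i) (fun z ↦ (z - x) / (z - y)) (A i)ᶜ) {c : ι → ℤ} {m : ℤ}
    (hc : ∑ i, c i = 0)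
    (hrel : ∀ z ∈ (⋃ i, A i)ᶜ, ∑ i, c i * g i z + m * (2 * Real.pi * I) = 0) : c = 0 := by
  classical
  ext j
  let B : Set ℂ := ⋃ i ∈ Finset.univ.erase j, A i
  have hB : IsClosed (B ∪ {x, y}) :=
    (isClosed_biUnion_finset fun i _ ↦ hA i).union (toFinite {x, y}).isClosed
  have hj : IsLogBranchOn (fun z ↦ (-c j : ℤ) * g j z) (fun z ↦ ((z - x) / (z - y)) ^ (-c j))
      (A j)ᶜ := (hg j).zpow (-c j)
  have hothers : IsLogBranchOn
      (fun z ↦ ∑ i ∈ Finset.univ.erase j, c i * g i z + m * (2 * Real.pi * I))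
      (fun z ↦ ((z - x) / (z - y)) ^ (-c j)) (B ∪ {x, y})ᶜ := by
    have hsum : ∑ i ∈ Finset.univ.erase j, c i = -c j := by
      rw [Finset.sum_erase_eq_sub (Finset.mem_univ j), hc, zero_sub]
    rw [← hsum]
    refine (IsLogBranchOn.sum_int_mul (fun i hi ↦ (hg i).mono ?_) (fun z hz ↦ ?_)
      c).add_int_mul_two_pi_mul_I m
    · exact compl_subset_compl.2 ((subset_biUnion_of_mem hi).trans subset_union_left)
    · rw [compl_union] at hz
      exact div_ne_zero (sub_ne_zero.2 fun h ↦ hz.2 (Or.inl h))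
        (sub_ne_zero.2 fun h ↦ hz.2 (Or.inr h))
  obtain ⟨L, hL⟩ := hj.exists_union_of_isOpen hothers (hA j).isOpen_compl hB.isOpen_compl <| by
    intro z hz
    rw [← compl_union] at hz
    have hzA : z ∈ (⋃ i, A i)ᶜ := fun h ↦ by
      obtain ⟨i, hi⟩ := mem_iUnion.1 h
      by_cases hij : i = j
      · exact hz (Or.inl (hij ▸ hi))
      · exact hz (Or.inr (Or.inl (mem_biUnion (Finset.mem_erase.2 ⟨hij, Finset.mem_univ i⟩) hi)))
    have := hrel z hzA
    rw [← Finset.add_sum_erase _ _ (Finset.mem_univ j)] at this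
    push_cast
    linear_combination -this
  have hcover : ({x, y} : Set ℂ)ᶜ ⊆ (A j)ᶜ ∪ (B ∪ {x, y})ᶜ := by
    rw [← compl_inter, compl_subset_compl, inter_union_distrib_left, inter_iUnion₂]
    exact union_subset (iUnion₂_subset fun i hi ↦ hAA (Finset.ne_of_mem_erase hi).symm)
      inter_subset_right
  exact neg_eq_zero.1 (eq_zero_of_isLogBranchOn_compl_pair hxy (hL.mono hcover))

theorem card_le_card_connectedComponents_compl_iUnion [Nonempty ι] (hxy : x ≠ y)
    (hA : ∀ i, IsClosed (A i)) (hAA : Pairwise fun i j ↦ A i ∩ A j ⊆ {x, y})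
    (hg : ∀ i, IsLogBranchOn (g i) (fun z ↦ (z - x) / (z - y)) (A i)ᶜ)
    (hne : (⋃ i, A i)ᶜ.Nonempty) [Finite (ConnectedComponents ↥(⋃ i, A i)ᶜ)] :
    Fintype.card ι ≤ Nat.card (ConnectedComponents ↥(⋃ i, A i)ᶜ) := by
  have hbranch (i : ι) : IsLogBranchOn (fun z : ↥(⋃ i, A i)ᶜ ↦ g i z)
      (fun z : ↥(⋃ i, A i)ᶜ ↦ ((z : ℂ) - x) / (z - y)) univ := by
    have hsub := compl_subset_compl.2 (subset_iUnion A i)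
    exact ⟨((hg i).continuousOn.comp_continuous continuous_subtype_val
      fun z ↦ hsub z.2).continuousOn, fun z _ ↦ (hg i).exp_eq z (hsub z.2)⟩
  let i₀ : ι := Classical.arbitrary ι
  choose n hn hsub using fun i ↦ (hbranch i).exists_int_continuous_sub_eq (hbranch i₀)
  let Φ : (ι → ℤ) × ℤ →ₗ[ℤ] (ConnectedComponents ↥(⋃ i, A i)ᶜ → ℤ) × ℤ :=
    (AddMonoidHom.mk' (fun p ↦ (fun q ↦ ∑ i, p.1 i * (hn i).connectedComponentsLift q + p.2,
      ∑ i, p.1 i)) fun p q ↦ by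
        ext <;> simp [add_mul, Finset.sum_add_distrib, add_add_add_comm]).toIntLinearMap
  have hΦ : Function.Injective Φ := by
    refine (injective_iff_map_eq_zero Φ).2 fun ⟨c, m⟩ h ↦ ?_
    have hsum : ∑ i, c i = 0 := congrArg Prod.snd h
    have hval (z : ↥(⋃ i, A i)ᶜ) : ∑ i, c i * n i z + m = 0 :=
      congrFun (congrArg Prod.fst h) (z : ConnectedComponents ↥(⋃ i, A i)ᶜ)
    have hc : c = 0 := by
      refine eq_zero_of_sum_int_mul_isLogBranchOn hxy hA hAA hg (m := m) hsum fun z hz ↦ ?_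
      obtain ⟨w, hw⟩ : ∃ w, ∀ i, g i z = w + n i ⟨z, hz⟩ * (2 * Real.pi * I) :=
        ⟨g i₀ z, fun i ↦ sub_eq_iff_eq_add'.1 (hsub i ⟨z, hz⟩)⟩
      have hvalC : ∑ i, (c i : ℂ) * n i ⟨z, hz⟩ + m = 0 := mod_cast hval ⟨z, hz⟩
      have hsumC : ∑ i, (c i : ℂ) = 0 := mod_cast hsum
      simp only [hw, mul_add, Finset.sum_add_distrib, ← mul_assoc, ← Finset.sum_mul, hsumC]
      linear_combination (2 * Real.pi * I) * hvalC
    obtain ⟨z, hz⟩ := hne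
    have hm := hval ⟨z, hz⟩
    simp_all
  have := Fintype.ofFinite (ConnectedComponents ↥(⋃ i, A i)ᶜ)
  simpa [Nat.card_eq_fintype_card] using LinearMap.finrank_le_finrank_of_injective hΦ

end LowerBound

section ComplementComponents

theorem connectedComponents_coe_eq_coe_iff {X : Type*} [TopologicalSpace X] {s : Set X} {u v : s} :
    (u : ConnectedComponents s) = v ↔ (u : X) ∈ connectedComponentIn s v := by
  rw [connectedComponentIn_eq_image v.2, ConnectedComponents.coe_eq_coe']
  exact (Subtype.val_injective.mem_set_image).symm

theorem frontier_connectedComponentIn_compl_subset {X : Type*} [TopologicalSpace X]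
    [LocallyConnectedSpace X] {K : Set X} (hK : IsClosed K) (b : X) :
    frontier (connectedComponentIn Kᶜ b) ⊆ K := by
  intro z hz
  by_contra hzK
  rw [(hK.isOpen_compl.connectedComponentIn).frontier_eq] at hz
  obtain ⟨w, hwz, hwb⟩ := mem_closure_iff.1 hz.1 _ hK.isOpen_compl.connectedComponentIn
    (mem_connectedComponentIn (mem_compl hzK))
  apply hz.2
  rw [connectedComponentIn_eq hwb, ← connectedComponentIn_eq hwz]
  exact mem_connectedComponentIn hzK

theorem isPreconnected_compl_closedBall {E : Type*} [NormedAddCommGroup E] [NormedSpace ℝ E]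
    (hE : 1 < Module.rank ℝ E) (x : E) {r : ℝ} (hr : 0 ≤ r) :
    IsPreconnected (closedBall x r)ᶜ := by
  have himage : (closedBall x r)ᶜ =
      (fun p : E × ℝ ↦ x + p.2 • p.1) '' (sphere 0 1 ×ˢ Ioi r) := by
    ext z
    rw [mem_compl_iff, mem_closedBall, not_le, dist_eq_norm]
    constructor
    · intro hz
      have hz0 : ‖z - x‖ ≠ 0 := (hr.trans_lt hz).ne'
      refine ⟨(‖z - x‖⁻¹ • (z - x), ‖z - x‖), ⟨?_, hz⟩, ?_⟩
      · simp [norm_smul, hz0]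
      · simp [smul_smul, hz0]
    · rintro ⟨⟨u, s⟩, ⟨hu, hs⟩, rfl⟩
      rw [mem_sphere_zero_iff_norm] at hu
      simpa [norm_smul, hu] using lt_of_lt_of_le hs (le_abs_self s)
  rw [himage]
  exact ((isPreconnected_sphere hE 0 1).prod isPreconnected_Ioi).image _ (by fun_prop)

theorem exists_forall_ne_isBounded_connectedComponentIn_compl {E : Type*} [NormedAddCommGroup E]
    [NormedSpace ℝ E] (hE : 1 < Module.rank ℝ E) {K : Set E} (hK : IsBounded K) :
    ∃ q : ConnectedComponents ↥Kᶜ, ∀ z : ↥Kᶜ, (z : ConnectedComponents ↥Kᶜ) ≠ q →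
      IsBounded (connectedComponentIn Kᶜ (z : E)) := by
  have : Nontrivial E := rank_pos_iff_nontrivial.1 (zero_lt_one.trans hE)
  obtain ⟨r, hr, hKr⟩ := hK.subset_closedBall_lt 0 0
  have hsub : (closedBall 0 r)ᶜ ⊆ Kᶜ := compl_subset_compl.2 hKr
  obtain ⟨w, hw⟩ : ((closedBall (0 : E) r)ᶜ).Nonempty := by
    obtain ⟨w, hw⟩ := NormedSpace.exists_lt_norm ℝ E r
    exact ⟨w, by simpa using hw⟩
  refine ⟨(⟨w, hsub hw⟩ : ↥Kᶜ), fun z hz ↦ isBounded_iff_subset_closedBall 0 |>.2 ⟨r, ?_⟩⟩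
  intro v hv
  by_contra hvr
  refine hz (connectedComponents_coe_eq_coe_iff.2 ?_).symm
  rw [connectedComponentIn_eq hv]
  exact (isPreconnected_compl_closedBall hE 0 hr.le).subset_connectedComponentIn hvr hsub hw

end ComplementComponents

section ThetaGraph

theorem isCompact_iUnion_range_path {X ι : Type*} [TopologicalSpace X] [Finite ι] {x y : X}
    (γ : ι → Path x y) : IsCompact (⋃ i, range (γ i)) :=
  isCompact_iUnion fun i ↦ isCompact_range (γ i).continuous

/-- The arcs `γ i` form a generalised theta graph: they are simple arcs with common endpoints
that are pairwise disjoint away from those endpoints. A simple closed curve is the case of two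
arcs, a simple closed curve together with a chord the case of three. The graph is given by its
parametrised arcs; as a set it is `⋃ i, range (γ i)`. -/
structure IsThetaGraph {X ι : Type*} [TopologicalSpace X] {x y : X} (γ : ι → Path x y) :
    Prop where
  injective : ∀ i, Function.Injective (γ i)
  pairwise_inter_subset : Pairwise fun i j ↦ range (γ i) ∩ range (γ j) ⊆ {x, y}

namespace IsThetaGraph

variable {X Y Z ι : Type*} [TopologicalSpace X] [TopologicalSpace Y] [TopologicalSpace Z]
  {x y : X} {γ : ι → Path x y}

theorem ne [Nonempty ι] (hγ : IsThetaGraph γ) : x ≠ y := by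
  obtain ⟨i⟩ := ‹Nonempty ι›
  simpa using (hγ.injective i).ne zero_ne_one

theorem map (hγ : IsThetaGraph γ) {f : X → Y} (hf : Continuous f) (hinj : Function.Injective f) :
    IsThetaGraph fun i ↦ (γ i).map hf where
  injective i := hinj.comp (hγ.injective i)
  pairwise_inter_subset i j hij := by
    simp only [Path.map_coe, range_comp]
    rw [← image_inter hinj, ← image_pair]
    exact image_mono (hγ.pairwise_inter_subset hij)

theorem option_elim (hγ : IsThetaGraph γ) {π : Path x y} (hπ : Function.Injective π)
    (hinter : range π ∩ ⋃ i, range (γ i) ⊆ {x, y}) :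
    IsThetaGraph fun o : Option ι ↦ o.elim π γ where
  injective := Option.rec hπ hγ.injective
  pairwise_inter_subset := by
    have hinter' (i : ι) : range π ∩ range (γ i) ⊆ {x, y} :=
      (inter_subset_inter_right _ (subset_iUnion _ i)).trans hinter
    rintro (_ | i) (_ | j) hij
    · exact (hij rfl).elim
    · exact hinter' j
    · exact (inter_comm _ _).trans_subset (hinter' i)
    · exact hγ.pairwise_inter_subset fun h ↦ hij (congrArg some h)

theorem apply_eq_apply_of_apply_eq_apply (hγ : IsThetaGraph γ) {u v : Z} (M : ι → Path u v)
    {i j : ι} {s t : unitInterval} (h : γ i s = γ j t) : M i s = M j t := by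
  obtain rfl | hij := eq_or_ne i j
  · rw [hγ.injective i h]
  obtain hx | hy := hγ.pairwise_inter_subset hij ⟨mem_range_self s, t, h.symm⟩
  · have hs : s = 0 := hγ.injective i (hx.trans (γ i).source.symm)
    have ht : t = 0 := hγ.injective j (h.symm.trans (hx.trans (γ j).source.symm))
    rw [hs, ht, (M i).source, (M j).source]
  · have hs : s = 1 := hγ.injective i (hy.trans (γ i).target.symm)
    have ht : t = 1 := hγ.injective j (h.symm.trans (hy.trans (γ j).target.symm))
    rw [hs, ht, (M i).target, (M j).target]

theorem exists_continuousMap_apply_eq [T2Space X] [Finite ι] (hγ : IsThetaGraph γ) {u v : Z}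
    (M : ι → Path u v) :
    ∃ g : C(↥(⋃ i, range (γ i)), Z),
      ∀ i t, g ⟨γ i t, mem_iUnion_of_mem i (mem_range_self t)⟩ = M i t := by
  let q : C(Σ _ : ι, unitInterval, ↥(⋃ i, range (γ i))) :=
    ⟨fun p ↦ ⟨γ p.1 p.2, mem_iUnion_of_mem p.1 (mem_range_self p.2)⟩,
      (continuous_sigma fun i ↦ (γ i).continuous).subtype_mk _⟩
  have hq : Function.Surjective q := by
    rintro ⟨z, hz⟩
    obtain ⟨i, t, rfl⟩ := mem_iUnion.1 hz
    exact ⟨⟨i, t⟩, rfl⟩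
  let N : C(Σ _ : ι, unitInterval, Z) := ⟨fun p ↦ M p.1 p.2, continuous_sigma fun i ↦
    (M i).continuous⟩
  have hN : Function.FactorsThrough N q := fun p p' h ↦
    hγ.apply_eq_apply_of_apply_eq_apply M (congrArg Subtype.val h)
  have hquot := IsQuotientMap.of_surjective_continuous hq q.continuous
  exact ⟨hquot.lift N hN, fun i t ↦ congrArg (fun f : C(_, Z) ↦ f ⟨i, t⟩) (hquot.lift_comp N hN)⟩

end IsThetaGraph

end ThetaGraph

section UpperBound

variable {ι κ : Type*} [Fintype ι] [Fintype κ]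

theorem eq_zero_of_exp_eq_prod_sub_zpow {K : Set ℂ} (hK : IsCompact K) {b : κ → ℂ}
    (hb : ∀ i, b i ∈ Kᶜ) (hbb : Pairwise fun i j ↦ b i ∉ connectedComponentIn Kᶜ (b j))
    (hbdd : ∀ j, IsBounded (connectedComponentIn Kᶜ (b j))) {k : κ → ℤ} (g : C(K, ℂ))
    (hg : ∀ z : K, exp (g z) = ∏ i, (z - b i) ^ k i) : k = 0 := by
  classical
  ext j
  set U := connectedComponentIn Kᶜ (b j)
  have hfr : frontier U ⊆ K := frontier_connectedComponentIn_compl_subset hK.isClosed _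
  have hsub {i : κ} (hi : i ∈ Finset.univ.erase j) {z : ℂ} (hz : z ∈ closure U) :
      z - b i ≠ 0 := sub_ne_zero.2 <| by
    rintro rfl
    rw [closure_eq_self_union_frontier] at hz
    exact hz.elim (hbb (Finset.ne_of_mem_erase hi)) fun h ↦ hb i (hfr h)
  obtain ⟨G, hG⟩ := ContinuousMap.exists_restrict_eq hK.isClosed g
  let Q : ℂ → ℂ := fun z ↦ ∏ i ∈ Finset.univ.erase j, (z - b i) ^ k i
  have hQ : ContinuousOn Q (closure U) := continuousOn_finsetProd _ fun i hi ↦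
    ContinuousOn.zpow₀ (by fun_prop) _ fun z hz ↦ Or.inl (hsub hi hz)
  have hQ0 (z : ℂ) (hz : z ∈ closure U) : Q z ≠ 0 :=
    Finset.prod_ne_zero_iff.2 fun i hi ↦ zpow_ne_zero _ (hsub hi hz)
  refine eq_zero_of_eqOn_frontier_sub_zpow (H := fun z ↦ exp (G z) / Q z)
    hK.isClosed.isOpen_compl.connectedComponentIn (hbdd j) (mem_connectedComponentIn (hb j))
    (ContinuousOn.div (by fun_prop) hQ hQ0)
    (fun z hz ↦ div_ne_zero (exp_ne_zero _) (hQ0 z hz)) fun z hz ↦ ?_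
  have hGz : G z = g ⟨z, hfr hz⟩ := congrArg (fun f : C(K, ℂ) ↦ f ⟨z, hfr hz⟩) hG
  have hsplit : exp (G z) = (z - b j) ^ k j * Q z := by
    rw [hGz, hg, Finset.mul_prod_erase _ (fun i ↦ (z - b i) ^ k i) (Finset.mem_univ j)]
  exact (eq_div_iff (hQ0 z (frontier_subset_closure hz))).2 hsplit.symm |>.symm

theorem exists_path_exp_eq {x y : ℂ} (γ : Path x y) (hγ : ∀ t, γ t ≠ 0) :
    ∃ (m : ℤ) (Λ : Path (log x) (log y + m * (2 * Real.pi * I))), ∀ t, exp (Λ t) = γ t := by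
  let γ' : C(unitInterval, {w : ℂ // w ≠ 0}) := ⟨fun t ↦ ⟨γ t, hγ t⟩, by fun_prop⟩
  have hstart : γ' 0 = ⟨exp (log x), exp_ne_zero _⟩ := Subtype.ext <| by
    simp only [γ', ContinuousMap.coe_mk, γ.source, exp_log (γ.source ▸ hγ 0 : x ≠ 0)]
  obtain ⟨Λ, hΛ, hΛ0⟩ := isCoveringMap_exp.exists_path_lifts γ' (log x) hstart
  have hexp (t : unitInterval) : exp (Λ t) = γ t := congrArg Subtype.val (congrFun hΛ t)
  have hy : exp (Λ 1) = exp (log y) := by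
    rw [hexp, γ.target, exp_log (γ.target ▸ hγ 1 : y ≠ 0)]
  obtain ⟨m, hm⟩ := exp_eq_exp_iff_exists_int.1 hy
  exact ⟨m, ⟨Λ, hΛ0, hm⟩, hexp⟩

theorem IsThetaGraph.card_lt_of_isBounded_connectedComponentIn [Nonempty ι] {x y : ℂ}
    {γ : ι → Path x y} (hγ : IsThetaGraph γ) {b : κ → ℂ} (hb : ∀ i, b i ∈ (⋃ j, range (γ j))ᶜ)
    (hbb : Pairwise fun i j ↦ b i ∉ connectedComponentIn (⋃ j, range (γ j))ᶜ (b j))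
    (hbdd : ∀ i, IsBounded (connectedComponentIn (⋃ j, range (γ j))ᶜ (b i))) :
    Fintype.card κ < Fintype.card ι := by
  have hne (i : κ) (j : ι) (t : unitInterval) : γ j t - b i ≠ 0 := sub_ne_zero.2 fun h ↦
    hb i (mem_iUnion_of_mem j ⟨t, h⟩)
  choose m Λ hΛ using fun i j ↦ exists_path_exp_eq
    ((γ j).map (f := fun z ↦ z - b i) (by fun_prop)) (hne i j)
  let Φ : (κ → ℤ) × ℤ →ₗ[ℤ] (ι → ℤ) :=
    (AddMonoidHom.mk' (fun p j ↦ ∑ i, p.1 i * m i j + p.2) fun p q ↦ by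
      ext; simp [add_mul, Finset.sum_add_distrib, add_add_add_comm]).toIntLinearMap
  have hΦ : Function.Injective Φ := by
    refine (injective_iff_map_eq_zero Φ).2 fun ⟨k, l⟩ h ↦ ?_
    have hval (j : ι) : ∑ i, k i * m i j + l = 0 := congrFun h j
    let M (j : ι) : Path (∑ i, k i * log (x - b i))
        (∑ i, k i * log (y - b i) - l * (2 * Real.pi * I)) :=
      { toFun t := ∑ i, k i * Λ i j t
        source' := by simp
        target' := by
          have hvalC : ∑ i, (k i : ℂ) * m i j + l = 0 := mod_cast hval j
          simp only [Path.target, mul_add, Finset.sum_add_distrib, ← mul_assoc, ← Finset.sum_mul]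
          linear_combination (2 * Real.pi * I) * hvalC }
    obtain ⟨g, hg⟩ := hγ.exists_continuousMap_apply_eq M
    have hk : k = 0 := by
      refine eq_zero_of_exp_eq_prod_sub_zpow (isCompact_iUnion_range_path γ) hb hbb hbdd g
        fun ⟨z, hz⟩ ↦ ?_
      obtain ⟨j, t, rfl⟩ := mem_iUnion.1 hz
      rw [hg]
      change exp (∑ i, k i * Λ i j t) = _
      rw [exp_sum]
      exact Finset.prod_congr rfl fun i _ ↦ by rw [exp_int_mul, hΛ]; rfl
    have hl := hval (Classical.arbitrary ι)
    simp_all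
  simpa using LinearMap.finrank_le_finrank_of_injective hΦ

theorem IsThetaGraph.card_finset_connectedComponents_le [Nonempty ι] {x y : ℂ}
    {γ : ι → Path x y} (hγ : IsThetaGraph γ)
    (s : Finset (ConnectedComponents ↥(⋃ i, range (γ i))ᶜ)) : s.card ≤ Fintype.card ι := by
  classical
  obtain ⟨q, hq⟩ := exists_forall_ne_isBounded_connectedComponentIn_compl
    (by rw [Complex.rank_real_complex]; exact Cardinal.one_lt_two)
    (isCompact_iUnion_range_path γ).isBounded
  choose b hb using (ConnectedComponents.surjective_coe : Function.Surjective
    ((↑) : ↥(⋃ i, range (γ i))ᶜ → ConnectedComponents ↥(⋃ i, range (γ i))ᶜ))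
  have hlt : Fintype.card ↥(s.erase q) < Fintype.card ι := by
    refine hγ.card_lt_of_isBounded_connectedComponentIn (b := fun p ↦ b p) (fun p ↦ (b p).2)
      (fun p p' hp hmem ↦ hp (Subtype.ext ?_)) fun p ↦ hq _ ?_
    · simpa only [hb] using connectedComponents_coe_eq_coe_iff.2 hmem
    · simpa only [hb] using Finset.ne_of_mem_erase p.2
  rw [Fintype.card_coe] at hlt
  have := s.pred_card_le_card_erase (a := q)
  omega

end UpperBound

section ComponentCount

theorem IsThetaGraph.card_connectedComponents_compl {ι : Type*} [Fintype ι] [Nonempty ι]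
    {x y : ℂ} {γ : ι → Path x y} (hγ : IsThetaGraph γ) :
    Nat.card (ConnectedComponents ↥(⋃ i, range (γ i))ᶜ) = Fintype.card ι := by
  have hle := hγ.card_finset_connectedComponents_le
  have := fintypeOfFinsetCardLe _ hle
  have hclosed (i : ι) : IsClosed (range (γ i)) := (isCompact_range (γ i).continuous).isClosed
  have hne : (⋃ i, range (γ i))ᶜ.Nonempty := nonempty_compl.2 fun h ↦
    NormedSpace.unbounded_univ ℂ ℂ (h ▸ isCompact_iUnion_range_path γ |>.isBounded)
  choose g hg using fun i ↦ exists_isLogBranchOn_compl_range (γ i)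
  refine le_antisymm ?_ (card_le_card_connectedComponents_compl_iUnion hγ.ne hclosed
    hγ.pairwise_inter_subset hg hne)
  simpa [Nat.card_eq_fintype_card] using hle Finset.univ

theorem card_connectedComponents_eq_of_homeomorph {X Y : Type*} [TopologicalSpace X]
    [TopologicalSpace Y] (e : X ≃ₜ Y) :
    Nat.card (ConnectedComponents X) = Nat.card (ConnectedComponents Y) :=
  Nat.card_congr (e.isQuotientMap.isCoinducing.connectedComponentsHomeomorph fun y ↦ by
    rw [← e.image_symm, image_singleton]
    exact isConnected_singleton).toEquiv

theorem IsThetaGraph.card_connectedComponents_compl_of_homeomorph {X ι : Type*}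
    [TopologicalSpace X] (e : X ≃ₜ ℂ) [Fintype ι] [Nonempty ι] {x y : X} {γ : ι → Path x y}
    (hγ : IsThetaGraph γ) :
    Nat.card (ConnectedComponents ↥(⋃ i, range (γ i))ᶜ) = Fintype.card ι := by
  have himage : e '' (⋃ i, range (γ i))ᶜ = (⋃ i, range ((γ i).map e.continuous))ᶜ := by
    simp only [image_compl_eq e.bijective, image_iUnion, Path.map_coe, range_comp]
  rw [← (hγ.map e.continuous e.injective).card_connectedComponents_compl]
  exact card_connectedComponents_eq_of_homeomorph
    ((e.image _).trans (Homeomorph.setCongr himage))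

end ComponentCount

section SimpleClosedCurve

variable {X : Type*} [TopologicalSpace X] {p : ℝ} [hp : Fact (0 < p)]

theorem exists_addCircle_injective_range_eq {f : ℝ → X} (hf : ContinuousOn f (Icc 0 p))
    (hloop : f 0 = f p) (hinj : InjOn f (Ico 0 p)) :
    ∃ c : C(AddCircle p, X), Function.Injective c ∧ range c = f '' Icc 0 p := by
  have hcoe {t : ℝ} (ht : t ∈ Ico 0 p) : AddCircle.liftIco p 0 f t = f t :=
    AddCircle.liftIco_zero_coe_apply ht
  have hsurj (z : AddCircle p) : ∃ t ∈ Ico 0 p, (t : AddCircle p) = z := by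
    have hz := mem_univ z
    rwa [← AddCircle.coe_image_Ico_eq p 0, zero_add] at hz
  refine ⟨⟨AddCircle.liftIco p 0 f, AddCircle.liftIco_zero_continuous hloop hf⟩, ?_, ?_⟩
  · intro z w h
    obtain ⟨s, hs, rfl⟩ := hsurj z
    obtain ⟨t, ht, rfl⟩ := hsurj w
    simp only [ContinuousMap.coe_mk, hcoe hs, hcoe ht] at h
    rw [hinj hs ht h]
  · apply Subset.antisymm
    · rintro _ ⟨z, rfl⟩
      obtain ⟨t, ht, rfl⟩ := hsurj z
      exact ⟨t, Ico_subset_Icc_self ht, (hcoe ht).symm⟩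
    · rintro _ ⟨t, ht, rfl⟩
      obtain rfl | htp := ht.2.eq_or_lt
      · exact ⟨(0 : ℝ), (hcoe ⟨le_rfl, hp.out⟩).trans hloop⟩
      · exact ⟨t, hcoe ⟨ht.1, htp⟩⟩

theorem injective_coe_segment_addCircle {s t : ℝ} (hst : s ≠ t) (hlt : |t - s| < p) :
    Function.Injective fun r ↦ (Path.segment s t r : AddCircle p) := by
  have hmem (r : unitInterval) : Path.segment s t r ∈ Ico (min s t) (min s t + p) := by
    have hr : Path.segment s t r ∈ Icc (min s t) (max s t) := by
      rw [← uIcc, ← segment_eq_uIcc, ← Path.range_segment]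
      exact mem_range_self r
    exact ⟨hr.1, hr.2.trans_lt (by rw [← max_sub_min_eq_abs] at hlt; linarith)⟩
  exact fun r r' h ↦ Path.segment_injective_of_ne hst
    ((AddCircle.coe_eq_coe_iff_of_mem_Ico (hmem r) (hmem r')).1 h)

theorem exists_isThetaGraph_bool_addCircle {z w : AddCircle p} (hzw : z ≠ w) :
    ∃ δ : Bool → Path z w, IsThetaGraph δ ∧ ⋃ i, range (δ i) = univ := by
  obtain ⟨s, rfl⟩ := QuotientAddGroup.mk_surjective z
  obtain ⟨t, ⟨hst, htp⟩, rfl⟩ : w ∈ ((↑) : ℝ → AddCircle p) '' Ico s (s + p) :=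
    AddCircle.coe_image_Ico_eq p s ▸ mem_univ w
  replace hst : s < t := hst.lt_of_ne fun h ↦ hzw (congrArg _ h)
  have hcoe : Continuous ((↑) : ℝ → AddCircle p) := AddCircle.continuous_mk' p
  let forward : Path (s : AddCircle p) t := (Path.segment s t).map hcoe
  let backward : Path (s : AddCircle p) t :=
    ((Path.segment (s + p) t).map hcoe).cast (AddCircle.coe_add_period p s).symm rfl
  have hforward : range forward = (↑) '' Icc s t := by
    rw [← segment_eq_Icc hst.le, ← Path.range_segment]
    exact range_comp ((↑) : ℝ → AddCircle p) _
  have hbackward : range backward = (↑) '' Icc t (s + p) := by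
    rw [← segment_eq_Icc htp.le, segment_symm, ← Path.range_segment]
    exact range_comp ((↑) : ℝ → AddCircle p) _
  have hinter : range forward ∩ range backward ⊆ {↑s, ↑t} := by
    rw [hforward, hbackward]
    rintro _ ⟨⟨u, hu, rfl⟩, v, hv, hvu⟩
    obtain rfl | hvp := hv.2.eq_or_lt
    · exact Or.inl (hvu.symm.trans (AddCircle.coe_add_period p s))
    · have huv : v = u := (AddCircle.coe_eq_coe_iff_of_mem_Ico ⟨hst.le.trans hv.1, hvp⟩
        ⟨hu.1, hu.2.trans_lt htp⟩).1 hvu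
      exact Or.inr (congrArg _ (hu.2.antisymm (huv ▸ hv.1)))
  have hrange : ⋃ i : Bool, range (bif i then forward else backward : Path (s : AddCircle p) t) =
      range forward ∪ range backward := iSup_bool_eq
  refine ⟨fun i ↦ bif i then forward else backward, ⟨?_, ?_⟩, ?_⟩
  · rintro (_ | _)
    · exact injective_coe_segment_addCircle htp.ne' (abs_sub_lt_iff.2 ⟨by linarith, by linarith⟩)
    · exact injective_coe_segment_addCircle hst.ne (abs_sub_lt_iff.2 ⟨by linarith, by linarith⟩)
  · rintro (_ | _) (_ | _) hij
    exacts [(hij rfl).elim, (inter_comm _ _).trans_subset hinter, hinter, (hij rfl).elim]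
  · rw [hrange, hforward, hbackward, ← image_union,
      Icc_union_Icc_eq_Icc hst.le htp.le, AddCircle.coe_image_Icc_eq]

theorem exists_isThetaGraph_bool_iUnion_range_eq (c : C(AddCircle p, X))
    (hc : Function.Injective c) {x y : X} (hxy : x ≠ y) (hx : x ∈ range c) (hy : y ∈ range c) :
    ∃ δ : Bool → Path x y, IsThetaGraph δ ∧ ⋃ i, range (δ i) = range c := by
  obtain ⟨z, rfl⟩ := hx
  obtain ⟨w, rfl⟩ := hy
  obtain ⟨δ, hδ, hcover⟩ := exists_isThetaGraph_bool_addCircle (ne_of_apply_ne c hxy)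
  refine ⟨_, hδ.map c.continuous hc, ?_⟩
  simp only [Path.map_coe, range_comp, ← image_iUnion, hcover, image_univ]

end SimpleClosedCurve

/-- **A consequence of the Jordan curve theorem.** Let `C ⊆ ℝ²` be a simple closed curve
(the image of a continuous loop `γ : [0,1] → ℝ²` with `γ 0 = γ 1` that is injective on
`[0,1)`), let `x ≠ y` be two points of `C`, and let `P` be the image of an injective
continuous path `p : [0,1] → ℝ²` from `x` to `y` with `P ∩ C = {x, y}`. Then
`ℝ² \ (C ∪ P)` has exactly three connected components. -/
theorem jordan_curve_with_arc_three_components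
    (γ : ℝ → EuclideanSpace ℝ (Fin 2)) (hγcont : ContinuousOn γ (Set.Icc 0 1))
    (hγloop : γ 0 = γ 1) (hγinj : Set.InjOn γ (Set.Ico 0 1))
    (C : Set (EuclideanSpace ℝ (Fin 2))) (hC : C = γ '' Set.Icc 0 1)
    (x y : EuclideanSpace ℝ (Fin 2)) (hxy : x ≠ y) (hxC : x ∈ C) (hyC : y ∈ C)
    (p : ℝ → EuclideanSpace ℝ (Fin 2)) (hpcont : ContinuousOn p (Set.Icc 0 1))
    (hp0 : p 0 = x) (hp1 : p 1 = y) (hpinj : Set.InjOn p (Set.Icc 0 1))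
    (P : Set (EuclideanSpace ℝ (Fin 2))) (hP : P = p '' Set.Icc 0 1)
    (hPC : P ∩ C = {x, y}) :
    Nat.card (ConnectedComponents ↥((C ∪ P)ᶜ)) = 3 := by
  obtain ⟨c, hc, hrange⟩ := exists_addCircle_injective_range_eq hγcont hγloop hγinj
  rw [← hrange] at hC
  obtain ⟨δ, hδ, hδC⟩ := exists_isThetaGraph_bool_iUnion_range_eq c hc hxy (hC ▸ hxC) (hC ▸ hyC)
  let π : Path x y := Path.ofLine hpcont hp0 hp1
  have hπP : range π = P := by
    rw [hP, image_eq_range]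
    rfl
  have hπ : Function.Injective π := hpinj.injective
  have htheta : IsThetaGraph fun o : Option Bool ↦ o.elim π δ :=
    hδ.option_elim hπ (by rw [hπP, hδC, ← hC, hPC])
  have hunion : C ∪ P = ⋃ o : Option Bool, range (o.elim π δ : Path x y) := by
    rw [iUnion_option, hC, ← hδC, ← hπP, union_comm]
    rfl
  rw [hunion, htheta.card_connectedComponents_compl_of_homeomorph
    Complex.orthonormalBasisOneI.repr.toHomeomorph.symm]
  rfl
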